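/- The q-commutator of the raising and lowering angular-momentum operators acts diagonally on the basis of V: for every (π₀,π₁,j) ∈ S, (L⁺ L⁻ − q L⁻ L⁺) e_{π₀,π₁,j} = ( (q^{−3/2−2π₀} + q^{−1/2−w−2j}) / (q⁻¹ − 1) ) e_{π₀,π₁,j}. -/

import Mathlib

/-!
Write `n = π₀ - j` and `F(n) = (1 + q^(n-w)) (1 - q^n) / ((q⁻¹-1)(1-q))`. Up to powers of `q`, both
`L⁺ : e_j ↦ e_{j+1}` and `L⁻ : e_{j+1} ↦ e_j` have matrix element `√F(n)`. Hence `L⁺L⁻` acts on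
`e_j` by `q^(-3/2-2π₀) F(n+1)` and `L⁻L⁺` by `q^(-3/2-2π₀) F(n)`, also at the top of the ladder,
where `L⁺` vanishes, because `F(0) = 0`. The claim is then the two-term recurrence
`F(n+1) - q F(n) = (1 + q^(2n+1-w)) / (q⁻¹-1)`.
-/

/- The irreducible Hilbert-space representation of highest weight `w` of the q-Euclidean
algebra `U_q(e³)` (Theorem 3 of the paper): `S` is the index set of the q-lattice,
`V` the space of finitely supported functions `S → ℂ` with canonical basis `e`,
and `P0, P1, Pm1, Lam, LamInv, K, Lp, Lm` realize the generators
`p⁰, p¹, p⁻¹, Λ, Λ⁻¹, k¹, L^{01}, L^{−1,0}`. -/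

noncomputable section

/-- The q-lattice index set `S = {(π₀,π₁,j) ∈ ℤ³ : π₀ ≥ 0, j ≤ π₀}`. -/
structure SIdx : Type where
  π0 : ℤ
  π1 : ℤ
  j : ℤ
  hπ0 : 0 ≤ π0
  hj : j ≤ π0

instance : DecidableEq SIdx := fun _ _ => Classical.dec _

/-- `V`: finitely supported functions `S → ℂ`. -/
abbrev V : Type := SIdx →₀ ℂ

/-- The canonical basis vector `e_{π₀,π₁,j}`. -/
def e (s : SIdx) : V := Finsupp.single s 1

/-- The linear operator on `V` determined by its values on the canonical basis. -/
def opOf (g : SIdx → V) : V →ₗ[ℂ] V :=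
  Finsupp.lsum ℂ fun s => LinearMap.toSpanSingleton ℂ V (g s)

/-- `P₀ e_{π₀,π₁,j} = ε M (1+q⁻¹)^(1/2) q^(2+π₀+π₁) e_{π₀,π₁,j}`. -/
def P0 (q M ε : ℝ) : V →ₗ[ℂ] V :=
  opOf fun s => ((ε * M * Real.sqrt (1 + q⁻¹) * q ^ (2 + s.π0 + s.π1) : ℝ) : ℂ) • e s

/-- `P₁ e_{π₀,π₁,j} = M (1−q^(2π₀+2))^(1/2) q^(1+π₁) e_{π₀+1,π₁,j+1}`. -/
def P1 (q M : ℝ) : V →ₗ[ℂ] V :=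
  opOf fun s => ((M * Real.sqrt (1 - q ^ (2 * s.π0 + 2)) * q ^ (1 + s.π1) : ℝ) : ℂ) •
    e ⟨s.π0 + 1, s.π1, s.j + 1, by have h0 := s.hπ0; have h1 := s.hj; omega, by have h0 := s.hπ0; have h1 := s.hj; omega⟩

/-- `P₋₁ e_{π₀,π₁,j} = M (1−q^(2π₀))^(1/2) q^(1/2+π₁) e_{π₀−1,π₁,j−1}` (zero if `π₀ = 0`). -/
def Pm1 (q M : ℝ) : V →ₗ[ℂ] V :=
  opOf fun s =>
    if h : 0 < s.π0 then
      ((M * Real.sqrt (1 - q ^ (2 * s.π0)) * q ^ ((1 : ℝ) / 2 + (s.π1 : ℝ)) : ℝ) : ℂ) •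
        e ⟨s.π0 - 1, s.π1, s.j - 1, by have h0 := s.hπ0; have h1 := s.hj; omega, by have h0 := s.hπ0; have h1 := s.hj; omega⟩
    else 0

/-- `Λ e_{π₀,π₁,j} = e_{π₀,π₁+1,j}`. -/
def Lam : V →ₗ[ℂ] V := opOf fun s => e ⟨s.π0, s.π1 + 1, s.j, s.hπ0, s.hj⟩

/-- `Λ⁻¹ e_{π₀,π₁,j} = e_{π₀,π₁−1,j}`. -/
def LamInv : V →ₗ[ℂ] V := opOf fun s => e ⟨s.π0, s.π1 - 1, s.j, s.hπ0, s.hj⟩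

/-- `K e_{π₀,π₁,j} = q^(2j+w) e_{π₀,π₁,j}`. -/
def K (q w : ℝ) : V →ₗ[ℂ] V :=
  opOf fun s => ((q ^ (2 * (s.j : ℝ) + w) : ℝ) : ℂ) • e s

/-- `L⁺ e_{π₀,π₁,j} = q^(−3/2−π₀) [(1+q^(π₀−j−w))(1−q^(π₀−j))/((q⁻¹−1)(1−q))]^(1/2)
    e_{π₀,π₁,j+1}` (zero if `j = π₀`). -/
def Lp (q w : ℝ) : V →ₗ[ℂ] V :=
  opOf fun s =>
    if h : s.j < s.π0 then
      ((q ^ (-(3 : ℝ) / 2 - (s.π0 : ℝ)) *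
          Real.sqrt ((1 + q ^ ((s.π0 : ℝ) - (s.j : ℝ) - w)) *
            (1 - q ^ ((s.π0 : ℝ) - (s.j : ℝ))) / ((q⁻¹ - 1) * (1 - q))) : ℝ) : ℂ) •
        e ⟨s.π0, s.π1, s.j + 1, s.hπ0, by have h0 := s.hπ0; have h1 := s.hj; omega⟩
    else 0

/-- `L⁻ e_{π₀,π₁,j} = q^(−π₀) [(1+q^(π₀−j+1−w))(1−q^(π₀−j+1))/((q⁻¹−1)(1−q))]^(1/2)
    e_{π₀,π₁,j−1}`. -/
def Lm (q w : ℝ) : V →ₗ[ℂ] V :=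
  opOf fun s =>
    ((q ^ (-(s.π0 : ℝ)) *
        Real.sqrt ((1 + q ^ ((s.π0 : ℝ) - (s.j : ℝ) + 1 - w)) *
          (1 - q ^ ((s.π0 : ℝ) - (s.j : ℝ) + 1)) / ((q⁻¹ - 1) * (1 - q))) : ℝ) : ℂ) •
      e ⟨s.π0, s.π1, s.j - 1, s.hπ0, by have h0 := s.hπ0; have h1 := s.hj; omega⟩

theorem opOf_e (g : SIdx → V) (s : SIdx) : opOf g (e s) = g s := by
  simp [opOf, e]

namespace SIdx

/-- The index `(π₀,π₁,j+1)` above a given one on the ladder with fixed `π₀` and `π₁`, along which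
`L⁺` moves basis vectors; it lies in `S` exactly when `j < π₀`. -/
def raise (s : SIdx) (h : s.j < s.π0) : SIdx :=
  ⟨s.π0, s.π1, s.j + 1, s.hπ0, h⟩

/-- The index `(π₀,π₁,j-1)` below a given one on the ladder with fixed `π₀` and `π₁`, along which
`L⁻` moves basis vectors. -/
def lower (s : SIdx) : SIdx :=
  ⟨s.π0, s.π1, s.j - 1, s.hπ0, (sub_one_lt s.j).le.trans s.hj⟩

theorem lower_j_lt_π0 (s : SIdx) : s.lower.j < s.lower.π0 :=
  (sub_one_lt s.j).trans_le s.hj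

theorem raise_lower (s : SIdx) : s.lower.raise s.lower_j_lt_π0 = s := by
  simp [raise, lower]

theorem lower_raise (s : SIdx) (h : s.j < s.π0) : (s.raise h).lower = s := by
  simp [raise, lower]

theorem π0_sub_j_nonneg (s : SIdx) : 0 ≤ (s.π0 : ℝ) - s.j :=
  sub_nonneg.2 (Int.cast_le.2 s.hj)

end SIdx

/-- The function `F` whose values are the radicands in the matrix elements of `L⁺` (at
`x = π₀ - j`) and of `L⁻` (at `x = π₀ - j + 1`). -/
def ladderRadicand (q w x : ℝ) : ℝ :=
  (1 + q ^ (x - w)) * (1 - q ^ x) / ((q⁻¹ - 1) * (1 - q))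

theorem ladderRadicand_zero (q w : ℝ) : ladderRadicand q w 0 = 0 := by
  simp [ladderRadicand]

theorem Lm_e (q w : ℝ) (s : SIdx) :
    Lm q w (e s) =
      ((q ^ (-(s.π0 : ℝ)) * √(ladderRadicand q w (s.π0 - s.j + 1)) : ℝ) : ℂ) • e s.lower :=
  opOf_e _ s

theorem Lp_e_of_lt (q w : ℝ) (s : SIdx) (h : s.j < s.π0) :
    Lp q w (e s) =
      ((q ^ (-(3 : ℝ) / 2 - s.π0) * √(ladderRadicand q w (s.π0 - s.j)) : ℝ) : ℂ) •
        e (s.raise h) :=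
  (opOf_e _ s).trans (dif_pos h)

theorem Lp_e_of_eq (q w : ℝ) (s : SIdx) (h : s.j = s.π0) : Lp q w (e s) = 0 :=
  (opOf_e _ s).trans (dif_neg h.not_lt)

section Ladder

variable {q : ℝ} (w : ℝ)

theorem ladderRadicand_add_one_sub_mul (x : ℝ) (hq0 : 0 < q) (hq1 : q ≠ 1) :
    ladderRadicand q w (x + 1) - q * ladderRadicand q w x =
      (1 + q ^ (2 * x + 1 - w)) / (q⁻¹ - 1) := by
  have hshift : q ^ (x + 1) = q * q ^ x := by
    rw [Real.rpow_add_one hq0.ne', mul_comm]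
  have hshift_w : q ^ (x + 1 - w) = q * q ^ (x - w) := by
    rw [add_sub_right_comm, Real.rpow_add_one hq0.ne', mul_comm]
  have hcross : q ^ (2 * x + 1 - w) = q * (q ^ (x - w) * q ^ x) := by
    rw [show 2 * x + 1 - w = x - w + x + 1 by ring, Real.rpow_add_one hq0.ne',
      Real.rpow_add hq0, mul_comm]
  have hinv : q⁻¹ - 1 ≠ 0 := sub_ne_zero.2 (inv_ne_one.2 hq1)
  have hsub : 1 - q ≠ 0 := sub_ne_zero.2 hq1.symm
  rw [ladderRadicand, ladderRadicand, hshift, hshift_w, hcross, mul_div_assoc', ← sub_div,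
    div_eq_div_iff (mul_ne_zero hinv hsub) hinv]
  ring

theorem ladderRadicand_nonneg {x : ℝ} (hq0 : 0 < q) (hq1 : q < 1) (hx : 0 ≤ x) :
    0 ≤ ladderRadicand q w x := by
  have hinv : 0 ≤ q⁻¹ - 1 := sub_nonneg.2 ((one_le_inv₀ hq0).2 hq1.le)
  have hsub : 0 ≤ 1 - q := sub_nonneg.2 hq1.le
  have hpow : 0 ≤ 1 - q ^ x := sub_nonneg.2 (Real.rpow_le_one hq0.le hq1.le hx)
  exact div_nonneg (mul_nonneg (by positivity) hpow) (mul_nonneg hinv hsub)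

theorem lowering_mul_raising_coeff {x : ℝ} (hq0 : 0 < q) (hq1 : q < 1) (hx : 0 ≤ x) (a : ℝ) :
    q ^ (-a) * √(ladderRadicand q w x) * (q ^ (-(3 : ℝ) / 2 - a) * √(ladderRadicand q w x)) =
      q ^ (-(3 : ℝ) / 2 - 2 * a) * ladderRadicand q w x := by
  rw [mul_mul_mul_comm, Real.mul_self_sqrt (ladderRadicand_nonneg w hq0 hq1 hx),
    ← Real.rpow_add hq0]
  ring_nf

theorem Lp_Lm_e (hq0 : 0 < q) (hq1 : q < 1) (s : SIdx) :
    Lp q w (Lm q w (e s)) =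
      ((q ^ (-(3 : ℝ) / 2 - 2 * s.π0) * ladderRadicand q w (s.π0 - s.j + 1) : ℝ) : ℂ) • e s := by
  have hx : 0 ≤ (s.π0 : ℝ) - s.j + 1 := add_nonneg s.π0_sub_j_nonneg zero_le_one
  have hlower : (s.lower.π0 : ℝ) - s.lower.j = s.π0 - s.j + 1 := by
    simp only [SIdx.lower, Int.cast_sub, Int.cast_one]
    ring
  rw [Lm_e, map_smul, Lp_e_of_lt q w s.lower s.lower_j_lt_π0, s.raise_lower, hlower, smul_smul,
    ← Complex.ofReal_mul, ← lowering_mul_raising_coeff w hq0 hq1 hx]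
  rfl

theorem Lm_Lp_e (hq0 : 0 < q) (hq1 : q < 1) (s : SIdx) :
    Lm q w (Lp q w (e s)) =
      ((q ^ (-(3 : ℝ) / 2 - 2 * s.π0) * ladderRadicand q w (s.π0 - s.j) : ℝ) : ℂ) • e s := by
  rcases s.hj.eq_or_lt with htop | hlt
  · rw [Lp_e_of_eq q w s htop, htop, sub_self, ladderRadicand_zero, mul_zero, map_zero,
      Complex.ofReal_zero, zero_smul]
  · have hraise : ((s.raise hlt).π0 : ℝ) - (s.raise hlt).j + 1 = s.π0 - s.j := by
      simp only [SIdx.raise, Int.cast_add, Int.cast_one]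
      ring
    rw [Lp_e_of_lt q w s hlt, map_smul, Lm_e, s.lower_raise, hraise, smul_smul,
      ← Complex.ofReal_mul, mul_comm, ← lowering_mul_raising_coeff w hq0 hq1 s.π0_sub_j_nonneg]
    rfl

theorem ladder_eigenvalue (hq0 : 0 < q) (hq1 : q ≠ 1) (a j : ℝ) :
    q ^ (-(3 : ℝ) / 2 - 2 * a) * ladderRadicand q w (a - j + 1) -
        q * (q ^ (-(3 : ℝ) / 2 - 2 * a) * ladderRadicand q w (a - j)) =
      (q ^ (-(3 : ℝ) / 2 - 2 * a) + q ^ (-(1 : ℝ) / 2 - w - 2 * j)) / (q⁻¹ - 1) := by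
  have hexp : q ^ (-(3 : ℝ) / 2 - 2 * a) * q ^ (2 * (a - j) + 1 - w) =
      q ^ (-(1 : ℝ) / 2 - w - 2 * j) := by
    rw [← Real.rpow_add hq0]
    ring_nf
  rw [mul_left_comm, ← mul_sub, ladderRadicand_add_one_sub_mul w _ hq0 hq1, ← hexp]
  ring

theorem angular_q_commutator_diagonal_general (hq0 : 0 < q) (hq1 : q < 1) (s : SIdx) :
    (Lp q w ∘ₗ Lm q w - (q : ℂ) • (Lm q w ∘ₗ Lp q w)) (e s) =
      (((q ^ (-(3 : ℝ) / 2 - 2 * (s.π0 : ℝ)) + q ^ (-(1 : ℝ) / 2 - w - 2 * (s.j : ℝ))) /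
          (q⁻¹ - 1) : ℝ) : ℂ) • e s := by
  rw [LinearMap.sub_apply, LinearMap.smul_apply, LinearMap.comp_apply, LinearMap.comp_apply,
    Lp_Lm_e w hq0 hq1, Lm_Lp_e w hq0 hq1, smul_smul, ← sub_smul, ← Complex.ofReal_mul,
    ← Complex.ofReal_sub, ladder_eigenvalue w hq0 hq1.ne]

end Ladder

/-- The q-commutator of the raising and lowering angular-momentum
operators acts diagonally:
`(L⁺L⁻ − q L⁻L⁺) e_{π₀,π₁,j} = ((q^(−3/2−2π₀) + q^(−1/2−w−2j))/(q⁻¹−1)) e_{π₀,π₁,j}`. -/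
theorem angular_q_commutator_diagonal
    (q M ε w : ℝ) (hq0 : 0 < q) (hq1 : q < 1) (hM : 0 < M)
    (hε : ε = 1 ∨ ε = -1) (hw : 0 ≤ w) :
    ∀ s : SIdx,
      (Lp q w ∘ₗ Lm q w - (q : ℂ) • (Lm q w ∘ₗ Lp q w)) (e s) =
        (((q ^ (-(3 : ℝ) / 2 - 2 * (s.π0 : ℝ)) + q ^ (-(1 : ℝ) / 2 - w - 2 * (s.j : ℝ))) /
            (q⁻¹ - 1) : ℝ) : ℂ) • e s :=
  angular_q_commutator_diagonal_general w hq0 hq1
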